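/- Let U ⊆ ℂ be open, f holomorphic on U, and suppose γ ∈ U satisfies f'(γ) = 0 and f''(γ) ≠ 0. Then for every sufficiently small closed disk D ⊆ U centered at γ and every t in a punctured interval (Re f(γ), Re f(γ) + ε), the sublevel set {z ∈ D : Re f(z) ≤ t} deformation retracts onto a set whose relative homology H_*(sublevel set at t, sublevel set at Re f(γ) − δ) is concentrated in degree 1 with rank 1. -/

import Mathlib

open Complex Set

/-!
Near `γ` there is a holomorphic coordinate `w` with `f = f γ + w ^ 2`, hence
`Re f = Re f γ + (Re w) ^ 2 - (Im w) ^ 2`. In this coordinate the deformation clamps `Re w` to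
`|Re w| ≤ √((Im w) ^ 2 + σ)` while `σ` decreases from `δ` to `-δ`: the sublevel set is pushed onto
`{Re f ≤ Re f γ - δ}` together with the segment `Re w = 0`, `(Im w) ^ 2 ≤ δ`.

The disk `D` is not a round disk in the coordinate `w`, so one must see that the clamping does not
leave it. Points near the origin are harmless. A point that is moved farther out is moved
horizontally towards the imaginary axis and ends in the cone `|Im w| ≤ 2 |Re w|`, so its new
position vector makes an angle bounded away from `π / 2` with the displacement back to the old
position. The coordinate change is conformal at `γ`, so this angle stays acute in the `z`-plane,
and the distance to `γ` has not increased.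
-/

open Filter Metric
open scoped Topology InnerProductSpace

section AttachedArc

variable {X Y : Type*} [TopologicalSpace X] [TopologicalSpace Y]

/-- `e`, restricted to `[0, 1]`, is an embedded 1-cell in `A` attached to `B` along its endpoints.
Injectivity on the compact interval encodes the embedding (for Hausdorff `X`). -/
structure IsAttachedArc (e : ℝ → X) (A B : Set X) : Prop where
  continuousOn : ContinuousOn e (Icc 0 1)
  injOn : InjOn e (Icc 0 1)
  image_subset : e '' Icc 0 1 ⊆ A
  zero_mem : e 0 ∈ B
  one_mem : e 1 ∈ B
  notMem : ∀ s ∈ Ioo (0 : ℝ) 1, e s ∉ B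

/-- `H`, restricted to `[0, 1] × A`, is a strong deformation retraction of `A` onto `C`: points of
`C` stay fixed at all times. -/
structure IsStrongDeformationRetraction (H : ℝ × X → X) (A C : Set X) : Prop where
  continuousOn : ContinuousOn H (Icc (0 : ℝ) 1 ×ˢ A)
  map_zero : ∀ z ∈ A, H (0, z) = z
  map_one_mem : ∀ z ∈ A, H (1, z) ∈ C
  map_mem : ∀ s ∈ Icc (0 : ℝ) 1, ∀ z ∈ A, H (s, z) ∈ A
  map_eq_self : ∀ s ∈ Icc (0 : ℝ) 1, ∀ z ∈ C, H (s, z) = z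

theorem IsAttachedArc.comp {e : ℝ → X} {A B : Set X} {ψ : X → Y} (he : IsAttachedArc e A B)
    (hBA : B ⊆ A) (hψ : ContinuousOn ψ A) (hψinj : InjOn ψ A) :
    IsAttachedArc (ψ ∘ e) (ψ '' A) (ψ '' B) where
  continuousOn := hψ.comp he.continuousOn (mapsTo_iff_image_subset.2 he.image_subset)
  injOn := hψinj.comp he.injOn (mapsTo_iff_image_subset.2 he.image_subset)
  image_subset := by
    rw [image_comp]
    exact image_mono he.image_subset
  zero_mem := mem_image_of_mem ψ he.zero_mem
  one_mem := mem_image_of_mem ψ he.one_mem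
  notMem s hs := by
    have hsA : e s ∈ A := he.image_subset (mem_image_of_mem e (Ioo_subset_Icc_self hs))
    exact fun h => he.notMem s hs ((hψinj.mem_image_iff hBA hsA).1 h)

theorem IsStrongDeformationRetraction.conj {H : ℝ × X → X} {A C : Set X} {ψ : X → Y} {φ : Y → X}
    (hH : IsStrongDeformationRetraction H A C) (hCA : C ⊆ A) (hψ : ContinuousOn ψ A)
    (hφ : ContinuousOn φ (ψ '' A)) (hφψ : LeftInvOn φ ψ A) :
    IsStrongDeformationRetraction (fun p => ψ (H (p.1, φ p.2))) (ψ '' A) (ψ '' C) where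
  continuousOn := by
    have hφA : MapsTo φ (ψ '' A) A := by
      rintro _ ⟨z, hz, rfl⟩
      rwa [hφψ hz]
    have hpair : ContinuousOn (fun p : ℝ × Y => (p.1, φ p.2)) (Icc (0 : ℝ) 1 ×ˢ (ψ '' A)) :=
      continuousOn_fst.prodMk (hφ.comp continuousOn_snd fun _ hp => hp.2)
    exact hψ.comp (hH.continuousOn.comp hpair fun p hp => ⟨hp.1, hφA hp.2⟩)
      fun p hp => hH.map_mem p.1 hp.1 _ (hφA hp.2)
  map_zero := by
    rintro _ ⟨z, hz, rfl⟩
    simp only [hφψ hz, hH.map_zero z hz]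
  map_one_mem := by
    rintro _ ⟨z, hz, rfl⟩
    simpa only [hφψ hz] using mem_image_of_mem ψ (hH.map_one_mem z hz)
  map_mem := by
    rintro s hs _ ⟨z, hz, rfl⟩
    simpa only [hφψ hz] using mem_image_of_mem ψ (hH.map_mem s hs z hz)
  map_eq_self := by
    rintro s hs _ ⟨z, hz, rfl⟩
    simp only [hφψ (hCA hz), hH.map_eq_self s hs z hz]

end AttachedArc

section Clamp

variable {m x : ℝ}

theorem max_neg_min_eq_self (h : |x| ≤ m) : max (-m) (min m x) = x := by
  rw [min_eq_right (abs_le.1 h).2, max_eq_right (abs_le.1 h).1]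

theorem max_neg_min_sq_of_le_abs (hm : 0 ≤ m) (h : m ≤ |x|) : max (-m) (min m x) ^ 2 = m ^ 2 := by
  rcases le_abs.1 h with h | h
  · rw [min_eq_left h, max_eq_right (by linarith)]
  · rw [min_eq_right (by linarith), max_eq_left (by linarith), neg_sq]

theorem max_neg_min_mul_sub_nonneg (hm : 0 ≤ m) :
    0 ≤ max (-m) (min m x) * (x - max (-m) (min m x)) := by
  rcases le_total |x| m with h | h
  · rw [max_neg_min_eq_self h, sub_self, mul_zero]
  rcases le_abs.1 h with h | h
  · rw [min_eq_left h, max_eq_right (by linarith)]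
    exact mul_nonneg hm (by linarith)
  · rw [min_eq_right (by linarith), max_eq_left (by linarith)]
    exact mul_nonneg_of_nonpos_of_nonpos (by linarith) (by linarith)

theorem sq_le_sq_of_mul_sub_nonneg {x y : ℝ} (h : 0 ≤ x * (y - x)) : x ^ 2 ≤ y ^ 2 := by
  nlinarith [sq_nonneg (y - x)]

end Clamp

section Saddle

variable {K : Set ℂ} {δ σ τ : ℝ} {w : ℂ}

theorem sq_re (w : ℂ) : (w ^ 2).re = w.re ^ 2 - w.im ^ 2 := by
  rw [sq, mul_re, sq, sq]

theorem norm_le_of_re_sq_le_of_im_eq {w z : ℂ} (hre : w.re ^ 2 ≤ z.re ^ 2) (him : w.im = z.im) :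
    ‖w‖ ≤ ‖z‖ := by
  rw [← sq_le_sq₀ (norm_nonneg w) (norm_nonneg z), Complex.sq_norm, Complex.sq_norm, normSq_apply,
    normSq_apply, him]
  linarith

theorem mem_closedBall_zero_two_mul_sqrt (hδ : 0 ≤ δ) (h : w.re ^ 2 + w.im ^ 2 ≤ 4 * δ) :
    w ∈ closedBall 0 (2 * √δ) := by
  rw [mem_closedBall_zero_iff, ← sq_le_sq₀ (norm_nonneg w) (by positivity), mul_pow,
    Real.sq_sqrt hδ, Complex.sq_norm, normSq_apply]
  linarith

theorem exists_closedBall_two_mul_sqrt_subset (hK : K ∈ 𝓝 0) :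
    ∃ δ > 0, closedBall 0 (2 * √δ) ⊆ K := by
  have hradius : Tendsto (fun δ : ℝ => 2 * √δ) (𝓝[>] 0) (𝓝 0) :=
    tendsto_nhdsWithin_of_tendsto_nhds ((by fun_prop : Continuous _).tendsto' 0 0 (by simp))
  obtain ⟨δ, hball, hδ⟩ :=
    ((hradius.eventually (eventually_closedBall_subset hK)).and self_mem_nhdsWithin).exists
  exact ⟨δ, hδ, hball⟩

/-- Stability of a planar set under moving its points horizontally towards the imaginary axis, as
long as they end in the cone `|Im w| ≤ 2 |Re w|`. Small conformal images of disks have this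
property, which is what keeps the deformation of a saddle inside such an image. -/
def IsReShrinkStable (K : Set ℂ) : Prop :=
  ∀ w ∈ K, ∀ w' : ℂ, w'.im = w.im → 0 ≤ w'.re * (w.re - w'.re) → w'.im ^ 2 ≤ 4 * w'.re ^ 2 →
    w' ∈ K

/-- The projection, along horizontal lines, of the plane onto the sublevel set `{Re (w ^ 2) ≤ σ}` of
the saddle, together with the imaginary axis if `σ < 0`. Where `(Im w) ^ 2 + σ < 0`, the square root
has the junk value `0`, so that `w` is sent to the imaginary axis, as the deformation requires. -/
noncomputable def saddleClamp (σ : ℝ) (w : ℂ) : ℂ :=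
  ⟨max (-√(w.im ^ 2 + σ)) (min √(w.im ^ 2 + σ) w.re), w.im⟩

@[simp]
theorem saddleClamp_im (σ : ℝ) (w : ℂ) : (saddleClamp σ w).im = w.im := rfl

theorem continuous_saddleClamp : Continuous fun p : ℝ × ℂ => saddleClamp p.1 p.2 := by
  have h : (fun p : ℝ × ℂ => saddleClamp p.1 p.2) = fun p =>
      equivRealProdCLM.symm
        (max (-√(p.2.im ^ 2 + p.1)) (min √(p.2.im ^ 2 + p.1) p.2.re), p.2.im) := rfl
  rw [h]
  fun_prop

theorem saddleClamp_eq_self_of_sq_re_le (h : (w ^ 2).re ≤ σ) : saddleClamp σ w = w := by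
  rw [sq_re] at h
  exact Complex.ext (max_neg_min_eq_self (Real.abs_le_sqrt (by linarith))) rfl

theorem saddleClamp_eq_self_of_re_eq_zero (h : w.re = 0) : saddleClamp σ w = w :=
  Complex.ext (max_neg_min_eq_self (by rw [h, abs_zero]; exact Real.sqrt_nonneg _)) rfl

theorem saddleClamp_re_mul_sub_nonneg (σ : ℝ) (w : ℂ) :
    0 ≤ (saddleClamp σ w).re * (w.re - (saddleClamp σ w).re) :=
  max_neg_min_mul_sub_nonneg (Real.sqrt_nonneg _)

theorem saddleClamp_re_sq_le (σ : ℝ) (w : ℂ) : (saddleClamp σ w).re ^ 2 ≤ w.re ^ 2 :=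
  sq_le_sq_of_mul_sub_nonneg (saddleClamp_re_mul_sub_nonneg σ w)

theorem saddleClamp_re_sq (h : σ ≤ (w ^ 2).re) (hσ : 0 ≤ w.im ^ 2 + σ) :
    (saddleClamp σ w).re ^ 2 = w.im ^ 2 + σ := by
  rw [sq_re] at h
  have hle : √(w.im ^ 2 + σ) ≤ |w.re| := Real.sqrt_le_iff.2 ⟨abs_nonneg _, by rw [sq_abs]; linarith⟩
  rw [← Real.sq_sqrt hσ]
  exact max_neg_min_sq_of_le_abs (Real.sqrt_nonneg _) hle

theorem saddleClamp_re_eq_zero (hσ : w.im ^ 2 + σ ≤ 0) : (saddleClamp σ w).re = 0 := by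
  simp only [saddleClamp, Real.sqrt_eq_zero_of_nonpos hσ, neg_zero]
  exact max_eq_left (min_le_left _ _)

theorem saddleClamp_sq_re_le (σ : ℝ) (w : ℂ) : (saddleClamp σ w ^ 2).re ≤ (w ^ 2).re := by
  rw [sq_re, sq_re]
  exact sub_le_sub_right (saddleClamp_re_sq_le σ w) _

theorem IsReShrinkStable.saddleClamp_mem (hK : IsReShrinkStable K)
    (hball : closedBall 0 (2 * √δ) ⊆ K) (hδ : 0 ≤ δ) (hσ : -δ ≤ σ) (hw : w ∈ K)
    (hwδ : (w ^ 2).re ≤ δ) : saddleClamp σ w ∈ K := by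
  rcases le_total (w ^ 2).re σ with hle | hge
  · rwa [saddleClamp_eq_self_of_sq_re_le hle]
  rcases le_total (3 * w.im ^ 2) (4 * δ) with hsmall | hbig
  · have hre := saddleClamp_re_sq_le σ w
    rw [sq_re] at hwδ
    exact hball (mem_closedBall_zero_two_mul_sqrt hδ (by simp only [saddleClamp_im]; linarith))
  · have hcone : w.im ^ 2 ≤ 4 * (saddleClamp σ w).re ^ 2 := by
      rw [saddleClamp_re_sq hge (by linarith)]
      linarith
    exact hK w hw _ rfl (saddleClamp_re_mul_sub_nonneg σ w) hcone

/-- The 1-cell of the saddle `Re (w ^ 2)`: the segment `Re w = 0`, `(Im w) ^ 2 ≤ δ`, parametrized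
by `[0, 1]`. -/
noncomputable def saddleArc (δ s : ℝ) : ℂ := ⟨0, √δ * (2 * s - 1)⟩

theorem continuous_saddleArc : Continuous (saddleArc δ) := by
  have h : saddleArc δ = fun s => equivRealProdCLM.symm (0, √δ * (2 * s - 1)) := rfl
  rw [h]
  fun_prop

theorem injective_saddleArc (hδ : 0 < δ) : Function.Injective (saddleArc δ) := by
  intro s s' h
  have him : 2 * s - 1 = 2 * s' - 1 :=
    mul_left_cancel₀ (Real.sqrt_pos.2 hδ).ne' (congrArg Complex.im h)
  linarith

theorem saddleArc_sq_re (hδ : 0 ≤ δ) (s : ℝ) :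
    (saddleArc δ s ^ 2).re = -δ * (2 * s - 1) ^ 2 := by
  rw [sq_re]
  simp only [saddleArc, mul_pow, Real.sq_sqrt hδ]
  ring

theorem mem_image_saddleArc_iff (hδ : 0 < δ) :
    w ∈ saddleArc δ '' Icc 0 1 ↔ w.re = 0 ∧ w.im ^ 2 ≤ δ := by
  have hpos : 0 < √δ := Real.sqrt_pos.2 hδ
  constructor
  · rintro ⟨s, ⟨hs0, hs1⟩, rfl⟩
    refine ⟨rfl, ?_⟩
    simp only [saddleArc, mul_pow, Real.sq_sqrt hδ.le]
    nlinarith [mul_nonneg hs0 (sub_nonneg.2 hs1)]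
  · rintro ⟨hre, him⟩
    obtain ⟨hlo, hhi⟩ := abs_le.1 (Real.abs_le_sqrt him)
    have hlo' : -1 ≤ w.im / √δ := by rw [le_div_iff₀ hpos]; linarith
    have hhi' : w.im / √δ ≤ 1 := by rw [div_le_iff₀ hpos]; linarith
    refine ⟨(w.im / √δ + 1) / 2, ⟨by linarith, by linarith⟩, Complex.ext hre.symm ?_⟩
    simp only [saddleArc]
    field_simp
    ring

theorem image_saddleArc_subset (hball : closedBall 0 (2 * √δ) ⊆ K) (hδ : 0 < δ) (hτ : 0 ≤ τ) :
    saddleArc δ '' Icc 0 1 ⊆ {w ∈ K | (w ^ 2).re ≤ τ} := by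
  intro w hw
  obtain ⟨hre, him⟩ := (mem_image_saddleArc_iff hδ).1 hw
  refine ⟨hball (mem_closedBall_zero_two_mul_sqrt hδ.le (by rw [hre]; linarith)), ?_⟩
  rw [sq_re, hre]
  linarith [sq_nonneg w.im]

theorem isAttachedArc_saddleArc (hball : closedBall 0 (2 * √δ) ⊆ K) (hδ : 0 < δ) (hτ : 0 ≤ τ) :
    IsAttachedArc (saddleArc δ) {w ∈ K | (w ^ 2).re ≤ τ} {w ∈ K | (w ^ 2).re ≤ -δ} where
  continuousOn := continuous_saddleArc.continuousOn
  injOn := (injective_saddleArc hδ).injOn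
  image_subset := image_saddleArc_subset hball hδ hτ
  zero_mem := by
    refine ⟨(image_saddleArc_subset hball hδ hτ
      (mem_image_of_mem _ (left_mem_Icc.2 zero_le_one))).1, ?_⟩
    rw [saddleArc_sq_re hδ.le]
    linarith
  one_mem := by
    refine ⟨(image_saddleArc_subset hball hδ hτ
      (mem_image_of_mem _ (right_mem_Icc.2 zero_le_one))).1, ?_⟩
    rw [saddleArc_sq_re hδ.le]
    linarith
  notMem := by
    rintro s ⟨hs0, hs1⟩ ⟨-, hs⟩
    rw [saddleArc_sq_re hδ.le] at hs
    nlinarith [mul_pos hδ (mul_pos hs0 (sub_pos.2 hs1))]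

theorem isStrongDeformationRetraction_saddleClamp (hK : IsReShrinkStable K)
    (hball : closedBall 0 (2 * √δ) ⊆ K) (hδ : 0 < δ) (hτδ : τ ≤ δ) :
    IsStrongDeformationRetraction (fun p => saddleClamp ((1 - 2 * p.1) * δ) p.2)
      {w ∈ K | (w ^ 2).re ≤ τ}
      ({w ∈ K | (w ^ 2).re ≤ -δ} ∪ saddleArc δ '' Icc 0 1) where
  continuousOn := by
    have hpair : Continuous fun p : ℝ × ℂ => ((1 - 2 * p.1) * δ, p.2) := by fun_prop
    exact (continuous_saddleClamp.comp hpair).continuousOn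
  map_zero w hw := saddleClamp_eq_self_of_sq_re_le (by linarith [hw.2])
  map_one_mem w hw := by
    have hlevel : (1 - 2 * (1 : ℝ)) * δ = -δ := by ring
    simp only [hlevel]
    rcases le_total (w.im ^ 2) δ with him | him
    · exact Or.inr ((mem_image_saddleArc_iff hδ).2 ⟨saddleClamp_re_eq_zero (by linarith), him⟩)
    refine Or.inl ⟨hK.saddleClamp_mem hball hδ.le le_rfl hw.1 (hw.2.trans hτδ), ?_⟩
    rcases le_total (w ^ 2).re (-δ) with hle | hge
    · rwa [saddleClamp_eq_self_of_sq_re_le hle]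
    · rw [sq_re, saddleClamp_re_sq hge (by linarith), saddleClamp_im]
      linarith
  map_mem s hs w hw := by
    have hlevel : -δ ≤ (1 - 2 * s) * δ := by nlinarith [hs.2]
    exact ⟨hK.saddleClamp_mem hball hδ.le hlevel hw.1 (hw.2.trans hτδ),
      (saddleClamp_sq_re_le _ w).trans hw.2⟩
  map_eq_self := by
    rintro s hs w (⟨-, hw⟩ | hw)
    · exact saddleClamp_eq_self_of_sq_re_le (by nlinarith [hs.2])
    · exact saddleClamp_eq_self_of_re_eq_zero ((mem_image_saddleArc_iff hδ).1 hw).1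

end Saddle

section Conformal

variable {E F : Type*} [NormedAddCommGroup E] [InnerProductSpace ℝ E] [NormedAddCommGroup F]
  [InnerProductSpace ℝ F]

theorem norm_le_norm_add_of_inner_nonneg {x y : F} (h : 0 ≤ ⟪x, y⟫_ℝ) : ‖x‖ ≤ ‖x + y‖ := by
  rw [← sq_le_sq₀ (norm_nonneg x) (norm_nonneg _), norm_add_sq_real]
  linarith [sq_nonneg ‖y‖]

theorem inner_map_add_map_add_nonneg {L : E →L[ℝ] F} {u v : E} {x y : F} {η : ℝ}
    (hx : ‖x‖ ≤ η * ‖u‖) (hy : ‖y‖ ≤ η * ‖v‖)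
    (huv : (2 * ‖L‖ * η + η ^ 2) * (‖u‖ * ‖v‖) ≤ ⟪L u, L v⟫_ℝ) :
    0 ≤ ⟪L u + x, L v + y⟫_ℝ := by
  have h₁ : |⟪L u, y⟫_ℝ| ≤ (‖L‖ * ‖u‖) * (η * ‖v‖) :=
    (abs_real_inner_le_norm _ _).trans (by gcongr; exact L.le_opNorm u)
  have h₂ : |⟪x, L v⟫_ℝ| ≤ (η * ‖u‖) * (‖L‖ * ‖v‖) :=
    (abs_real_inner_le_norm _ _).trans
      (mul_le_mul hx (L.le_opNorm v) (norm_nonneg _) ((norm_nonneg x).trans hx))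
  have h₃ : |⟪x, y⟫_ℝ| ≤ (η * ‖u‖) * (η * ‖v‖) :=
    (abs_real_inner_le_norm _ _).trans
      (mul_le_mul hx hy (norm_nonneg _) ((norm_nonneg x).trans hx))
  simp only [inner_add_left, inner_add_right]
  linarith [(abs_le.1 h₁).1, (abs_le.1 h₂).1, (abs_le.1 h₃).1]

theorem eventually_norm_sub_le_of_isConformalMap {ψ : E → F} {L : E →L[ℝ] F} {a : E}
    (hψ : HasStrictFDerivAt ψ L a) (hL : IsConformalMap L) {c : ℝ} (hc : 0 < c) :
    ∀ᶠ p : E × E in 𝓝 (a, a), c * (‖p.1 - a‖ * ‖p.2 - p.1‖) ≤ ⟪p.1 - a, p.2 - p.1⟫_ℝ →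
      ‖ψ p.1 - ψ a‖ ≤ ‖ψ p.2 - ψ a‖ := by
  obtain ⟨k, hk, hLk⟩ := (isConformalMap_iff L).1 hL
  obtain ⟨η, hηc, hη⟩ : ∃ η : ℝ, 2 * ‖L‖ * η + η ^ 2 < k * c ∧ 0 < η := by
    have htends : Tendsto (fun η : ℝ => 2 * ‖L‖ * η + η ^ 2) (𝓝[>] 0) (𝓝 0) :=
      tendsto_nhdsWithin_of_tendsto_nhds ((by fun_prop : Continuous _).tendsto' 0 0 (by simp))
    exact ((htends.eventually_lt_const (mul_pos hk hc)).and self_mem_nhdsWithin).exists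
  have happrox : ∀ᶠ p : E × E in 𝓝 (a, a), ‖ψ p.1 - ψ p.2 - L (p.1 - p.2)‖ ≤ η * ‖p.1 - p.2‖ :=
    hψ.isLittleO.def hη
  have hfst : Tendsto (fun p : E × E => (p.1, a)) (𝓝 (a, a)) (𝓝 (a, a)) :=
    (by fun_prop : Continuous _).tendsto' _ _ rfl
  have hswap : Tendsto (fun p : E × E => (p.2, p.1)) (𝓝 (a, a)) (𝓝 (a, a)) :=
    (by fun_prop : Continuous _).tendsto' _ _ rfl
  filter_upwards [hfst.eventually happrox, hswap.eventually happrox] with p h₁ h₂ hp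
  have hacute : 0 ≤ ⟪ψ p.1 - ψ a, ψ p.2 - ψ p.1⟫_ℝ := by
    have hcone : (2 * ‖L‖ * η + η ^ 2) * (‖p.1 - a‖ * ‖p.2 - p.1‖) ≤
        ⟪L (p.1 - a), L (p.2 - p.1)⟫_ℝ :=
      calc _ ≤ k * c * (‖p.1 - a‖ * ‖p.2 - p.1‖) := by gcongr
        _ = k * (c * (‖p.1 - a‖ * ‖p.2 - p.1‖)) := mul_assoc _ _ _
        _ ≤ k * ⟪p.1 - a, p.2 - p.1⟫_ℝ := by gcongr
        _ = _ := (hLk _ _).symm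
    simpa only [add_sub_cancel] using inner_map_add_map_add_nonneg h₁ h₂ hcone
  simpa only [sub_add_sub_cancel'] using norm_le_norm_add_of_inner_nonneg hacute

theorem norm_mul_norm_sub_le_inner_of_im_eq {w w' : ℂ} (him : w'.im = w.im)
    (hre : 0 ≤ w'.re * (w.re - w'.re)) (hcone : w'.im ^ 2 ≤ 4 * w'.re ^ 2) :
    1 / 3 * (‖w'‖ * ‖w - w'‖) ≤ ⟪w', w - w'⟫_ℝ := by
  have hsub : w - w' = ((w.re - w'.re : ℝ) : ℂ) := Complex.ext (by simp) (by simp [him])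
  have hinner : ⟪w', w - w'⟫_ℝ = |w'.re| * |w.re - w'.re| := by
    rw [← abs_mul, abs_of_nonneg hre, hsub, Complex.inner, re_ofReal_mul, conj_re, mul_comm]
  have hnorm : ‖w'‖ ≤ 3 * |w'.re| := by
    rw [← sq_le_sq₀ (norm_nonneg w') (by positivity), mul_pow, sq_abs, Complex.sq_norm,
      normSq_apply]
    linarith [sq_nonneg w'.re]
  rw [hinner, hsub, norm_real, Real.norm_eq_abs]
  linarith [mul_le_mul_of_nonneg_right hnorm (abs_nonneg (w.re - w'.re))]

theorem eventually_isReShrinkStable_image_closedBall (Φ : OpenPartialHomeomorph F ℂ) {γ : F}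
    {L : ℂ →L[ℝ] F} (hγ : γ ∈ Φ.source) (hγ0 : Φ γ = 0) (hΦ : HasStrictFDerivAt Φ.symm L 0)
    (hL : IsConformalMap L) : ∀ᶠ r in 𝓝 (0 : ℝ), IsReShrinkStable (Φ '' closedBall γ r) := by
  have hsymm0 : Φ.symm 0 = γ := by rw [← hγ0, Φ.left_inv hγ]
  have htarget : Φ.target ∈ 𝓝 (0 : ℂ) := Φ.open_target.mem_nhds (hγ0 ▸ Φ.map_source hγ)
  obtain ⟨ρ, hρ, hball⟩ : ∃ ρ > 0, ∀ w ∈ ball (0 : ℂ) ρ, ∀ w' ∈ ball (0 : ℂ) ρ,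
      w' ∈ Φ.target ∧ (1 / 3 * (‖w'‖ * ‖w - w'‖) ≤ ⟪w', w - w'⟫_ℝ →
        ‖Φ.symm w' - γ‖ ≤ ‖Φ.symm w - γ‖) := by
    have hnear := (eventually_norm_sub_le_of_isConformalMap hΦ hL
      (by norm_num : (0 : ℝ) < 1 / 3)).and
      ((continuous_fst.tendsto ((0 : ℂ), (0 : ℂ))).eventually htarget)
    obtain ⟨ρ, hρ, h⟩ := Metric.eventually_nhds_iff_ball.1 hnear
    refine ⟨ρ, hρ, fun w hw w' hw' => ?_⟩
    obtain ⟨hle, hmem⟩ := h (w', w) (by rw [← ball_prod_same]; exact ⟨hw', hw⟩)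
    exact ⟨hmem, by simpa only [sub_zero, hsymm0] using hle⟩
  have hsmall : Φ.source ∩ Φ ⁻¹' ball 0 ρ ∈ 𝓝 γ :=
    inter_mem (Φ.open_source.mem_nhds hγ)
      ((Φ.continuousAt hγ).preimage_mem_nhds (by rw [hγ0]; exact ball_mem_nhds 0 hρ))
  filter_upwards [eventually_closedBall_subset hsmall] with r hr
  rintro _ ⟨z, hz, rfl⟩ w' him hre hcone
  have hw' : w' ∈ ball (0 : ℂ) ρ := mem_ball_zero_iff.2 <|
    (norm_le_of_re_sq_le_of_im_eq (sq_le_sq_of_mul_sub_nonneg hre) him).trans_lt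
      (mem_ball_zero_iff.1 (hr hz).2)
  obtain ⟨hw't, hle⟩ := hball (Φ z) (hr hz).2 w' hw'
  have hdist := hle (norm_mul_norm_sub_le_inner_of_im_eq him hre hcone)
  rw [Φ.left_inv (hr hz).1] at hdist
  exact ⟨Φ.symm w', mem_closedBall_iff_norm.2 (hdist.trans (mem_closedBall_iff_norm.1 hz)),
    Φ.right_inv hw't⟩

end Conformal

section Chart

variable {X : Type*} [TopologicalSpace X]

theorem sublevel_eq_symm_image (Φ : OpenPartialHomeomorph X ℂ) {D : Set X} {g : X → ℝ} {c : ℝ}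
    (hD : D ⊆ Φ.source) (hg : ∀ z ∈ D, g z = c + (Φ z ^ 2).re) (t : ℝ) :
    {z ∈ D | g z ≤ t} = Φ.symm '' {w ∈ Φ '' D | (w ^ 2).re ≤ t - c} := by
  ext z
  constructor
  · rintro ⟨hz, hzt⟩
    exact ⟨Φ z, ⟨mem_image_of_mem Φ hz, by linarith [hg z hz]⟩, Φ.left_inv (hD hz)⟩
  · rintro ⟨_, ⟨⟨z, hz, rfl⟩, hzt⟩, rfl⟩
    rw [Φ.left_inv (hD hz)]
    exact ⟨hz, by linarith [hg z hz]⟩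

theorem exists_isAttachedArc_isStrongDeformationRetraction (Φ : OpenPartialHomeomorph X ℂ)
    {D : Set X} {g : X → ℝ} {c δ t : ℝ} (hD : D ⊆ Φ.source)
    (hg : ∀ z ∈ D, g z = c + (Φ z ^ 2).re) (hK : IsReShrinkStable (Φ '' D)) (hδ : 0 < δ)
    (hball : closedBall 0 (2 * √δ) ⊆ Φ '' D) (hct : c ≤ t) (htδ : t ≤ c + δ) :
    ∃ (e : ℝ → X) (H : ℝ × X → X),
      IsAttachedArc e {z ∈ D | g z ≤ t} {z ∈ D | g z ≤ c - δ} ∧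
      IsStrongDeformationRetraction H {z ∈ D | g z ≤ t}
        ({z ∈ D | g z ≤ c - δ} ∪ e '' Icc 0 1) := by
  have hτ : 0 ≤ t - c := by linarith
  have hlevel : c - δ - c = -δ := by ring
  rw [sublevel_eq_symm_image Φ hD hg, sublevel_eq_symm_image Φ hD hg, hlevel]
  have hsub : {w ∈ Φ '' D | (w ^ 2).re ≤ -δ} ⊆ {w ∈ Φ '' D | (w ^ 2).re ≤ t - c} :=
    fun w hw => ⟨hw.1, by linarith [hw.2]⟩
  have htarget : {w ∈ Φ '' D | (w ^ 2).re ≤ t - c} ⊆ Φ.target := by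
    rintro _ ⟨⟨z, hz, rfl⟩, -⟩
    exact Φ.map_source (hD hz)
  have hsource : Φ.symm '' {w ∈ Φ '' D | (w ^ 2).re ≤ t - c} ⊆ Φ.source :=
    image_subset_iff.2 fun w hw => Φ.map_target (htarget hw)
  have hsymm := Φ.continuousOn_symm.mono htarget
  have hcell := (isAttachedArc_saddleArc hball hδ hτ).comp hsub hsymm (Φ.symm.injOn.mono htarget)
  have hretr := (isStrongDeformationRetraction_saddleClamp hK hball hδ (by linarith)).conj
    (union_subset hsub (image_saddleArc_subset hball hδ hτ)) hsymm (Φ.continuousOn.mono hsource)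
    fun w hw => Φ.right_inv (htarget hw)
  rw [image_union, ← image_comp] at hretr
  exact ⟨_, _, hcell, hretr⟩

end Chart

section MorseCoordinate

variable {f g : ℂ → ℂ} {z₀ : ℂ} {n : ℕ}

theorem exists_analyticAt_pow_eq (hg : AnalyticAt ℂ g z₀) (hg0 : g z₀ ≠ 0) (hn : n ≠ 0) :
    ∃ q : ℂ → ℂ, AnalyticAt ℂ q z₀ ∧ ∀ z, q z ^ n = g z := by
  obtain ⟨k, hk⟩ := IsAlgClosed.exists_pow_nat_eq (g z₀) (Nat.pos_of_ne_zero hn)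
  -- Dividing by `g z₀` moves the argument of the principal root to `1`, off its branch cut.
  refine ⟨fun z => k * (g z / g z₀) ^ (n : ℂ)⁻¹, ?_, fun z => ?_⟩
  · refine analyticAt_const.mul ((hg.div analyticAt_const hg0).cpow analyticAt_const ?_)
    rw [Pi.div_apply, div_self hg0]
    exact one_mem_slitPlane
  · rw [mul_pow, cpow_nat_inv_pow _ hn, hk, mul_div_cancel₀ _ hg0]

theorem exists_analyticAt_eq_add_pow (hf : AnalyticAt ℂ f z₀) (hn : n ≠ 0)
    (horder : analyticOrderAt (f · - f z₀) z₀ = n) :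
    ∃ φ : ℂ → ℂ, AnalyticAt ℂ φ z₀ ∧ φ z₀ = 0 ∧ deriv φ z₀ ≠ 0 ∧
      ∀ᶠ z in 𝓝 z₀, f z = f z₀ + φ z ^ n := by
  have hsub : AnalyticAt ℂ (f · - f z₀) z₀ := by fun_prop
  obtain ⟨g, hg, hg0, hfg⟩ := hsub.analyticOrderAt_eq_natCast.1 horder
  obtain ⟨q, hq, hqg⟩ := exists_analyticAt_pow_eq hg hg0 hn
  have hq0 : q z₀ ≠ 0 := fun h => hg0 (by rw [← hqg, h, zero_pow hn])
  have hderiv : HasDerivAt (fun z => (z - z₀) * q z) (q z₀) z₀ := by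
    simpa using ((hasDerivAt_id z₀).sub_const z₀).fun_mul hq.differentiableAt.hasDerivAt
  refine ⟨fun z => (z - z₀) * q z, by fun_prop, by simp, by rwa [hderiv.deriv], ?_⟩
  filter_upwards [hfg] with z hz
  rw [mul_pow, hqg, ← smul_eq_mul, ← hz, add_sub_cancel]

theorem analyticOrderAt_sub_eq_two (hf : AnalyticAt ℂ f z₀) (h1 : deriv f z₀ = 0)
    (h2 : deriv (deriv f) z₀ ≠ 0) : analyticOrderAt (f · - f z₀) z₀ = (2 : ℕ) := by
  rw [← hf.analyticOrderAt_deriv_add_one,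
    hf.deriv.analyticOrderAt_eq_one_of_zero_deriv_ne_zero h1 h2]
  norm_num

theorem exists_conformal_chart_eq_add_sq (hf : AnalyticAt ℂ f z₀) (h1 : deriv f z₀ = 0)
    (h2 : deriv (deriv f) z₀ ≠ 0) :
    ∃ (Φ : OpenPartialHomeomorph ℂ ℂ) (L : ℂ →L[ℝ] ℂ), z₀ ∈ Φ.source ∧ Φ z₀ = 0 ∧
      HasStrictFDerivAt Φ.symm L 0 ∧ IsConformalMap L ∧
      ∀ᶠ z in 𝓝 z₀, f z = f z₀ + Φ z ^ 2 := by
  obtain ⟨φ, hφ, hφ0, hφ', hfφ⟩ :=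
    exists_analyticAt_eq_add_pow hf two_ne_zero (analyticOrderAt_sub_eq_two hf h1 h2)
  have hequiv := hφ.hasStrictDerivAt.hasStrictFDerivAt_equiv hφ'
  let Φ := hequiv.toOpenPartialHomeomorph φ
  have hmem : z₀ ∈ Φ.source := hequiv.mem_toOpenPartialHomeomorph_source
  have hΦ0 : Φ z₀ = 0 := hφ0
  have htarget : (0 : ℂ) ∈ Φ.target := hΦ0 ▸ Φ.map_source hmem
  have hsymm0 : Φ.symm 0 = z₀ := by rw [← hΦ0, Φ.left_inv hmem]
  have hsymm : HasStrictDerivAt Φ.symm (deriv φ z₀)⁻¹ 0 :=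
    Φ.hasStrictDerivAt_symm htarget hφ' (hsymm0.symm ▸ hφ.hasStrictDerivAt)
  refine ⟨Φ, _, hmem, hΦ0, hsymm.hasStrictFDerivAt.restrictScalars ℝ,
    isConformalMap_complex_linear fun h => inv_ne_zero hφ' ?_, hfφ⟩
  simpa using DFunLike.congr_fun h 1

end MorseCoordinate

/-- Let `U ⊆ ℂ` be open, `f` holomorphic on `U`, and suppose
`γ ∈ U` satisfies `f'(γ) = 0` and `f''(γ) ≠ 0`. Then for every sufficiently
small closed disk `D ⊆ U` centered at `γ` and every `t` in a punctured
interval `(Re f(γ), Re f(γ) + ε)`, the sublevel set `{z ∈ D : Re f(z) ≤ t}`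
deformation retracts onto a set obtained from the lower sublevel set
`B = {Re f ≤ Re f(γ) − δ}` by attaching a single (embedded) 1-cell whose
interior is disjoint from `B`; consequently the relative homology
`H_*(sublevel at t, sublevel at Re f(γ) − δ)` is concentrated in degree 1 with
rank 1. (The relative homology statement is rendered by the explicit
one-cell-attachment deformation retraction.) -/
theorem stmt9 (U : Set ℂ) (hU : IsOpen U) (f : ℂ → ℂ)
    (hf : DifferentiableOn ℂ f U) (γ : ℂ) (hγ : γ ∈ U)
    (h1 : deriv f γ = 0) (h2 : deriv (deriv f) γ ≠ 0) :
    ∃ r₀ > 0, ∀ r : ℝ, 0 < r → r ≤ r₀ →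
      Metric.closedBall γ r ⊆ U ∧
      ∃ ε > 0, ∃ δ > 0, ∀ t : ℝ, (f γ).re < t → t < (f γ).re + ε →
        -- `A` is the sublevel set at `t`, `B` the sublevel set at `Re f(γ) − δ`
        let A : Set ℂ := {z ∈ Metric.closedBall γ r | (f z).re ≤ t}
        let B : Set ℂ := {z ∈ Metric.closedBall γ r | (f z).re ≤ (f γ).re - δ}
        ∃ e : ℝ → ℂ,
          ContinuousOn e (Icc 0 1) ∧ InjOn e (Icc 0 1) ∧
          e '' Icc 0 1 ⊆ A ∧ e 0 ∈ B ∧ e 1 ∈ B ∧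
          (∀ s ∈ Ioo (0:ℝ) 1, e s ∉ B) ∧
          -- the sublevel set `A` deformation retracts onto `B ∪ (1-cell)`
          ∃ H : ℝ × ℂ → ℂ,
            ContinuousOn H (Icc (0:ℝ) 1 ×ˢ A) ∧
            (∀ z ∈ A, H (0, z) = z) ∧
            (∀ z ∈ A, H (1, z) ∈ B ∪ e '' Icc 0 1) ∧
            (∀ s ∈ Icc (0:ℝ) 1, ∀ z ∈ A, H (s, z) ∈ A) ∧
            (∀ s ∈ Icc (0:ℝ) 1, ∀ z ∈ B ∪ e '' Icc 0 1, H (s, z) = z) := by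
  obtain ⟨Φ, L, hγΦ, hΦγ, hΦ, hL, hfΦ⟩ :=
    exists_conformal_chart_eq_add_sq (hf.analyticAt (hU.mem_nhds hγ)) h1 h2
  have hnear : ∀ᶠ z in 𝓝 γ, z ∈ U ∧ z ∈ Φ.source ∧ f z = f γ + Φ z ^ 2 :=
    (hU.eventually_mem hγ).and ((Φ.open_source.eventually_mem hγΦ).and hfΦ)
  obtain ⟨r₀, hr₀, hgood⟩ := mem_nhdsGT_iff_exists_Ioc_subset.1 <| mem_nhdsWithin_of_mem_nhds <|
    (eventually_closedBall_subset hnear).and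
      (eventually_isReShrinkStable_image_closedBall Φ hγΦ hΦγ hΦ hL)
  refine ⟨r₀, hr₀, fun r hr hrr₀ => ?_⟩
  obtain ⟨hD, hK⟩ := hgood ⟨hr, hrr₀⟩
  have hK0 : Φ '' closedBall γ r ∈ 𝓝 0 :=
    hΦγ ▸ Φ.image_mem_nhds hγΦ (closedBall_mem_nhds γ hr)
  obtain ⟨δ, hδ, hball⟩ := exists_closedBall_two_mul_sqrt_subset hK0
  have hre : ∀ z ∈ closedBall γ r, (f z).re = (f γ).re + (Φ z ^ 2).re := fun z hz => by
    rw [(hD hz).2.2, add_re]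
  refine ⟨fun z hz => (hD hz).1, δ, hδ, δ, hδ, fun t ht htδ => ?_⟩
  obtain ⟨e, H, he, hH⟩ := exists_isAttachedArc_isStrongDeformationRetraction Φ
    (fun z hz => (hD hz).2.1) hre hK hδ hball ht.le htδ.le
  exact ⟨e, he.continuousOn, he.injOn, he.image_subset, he.zero_mem, he.one_mem, he.notMem,
    H, hH.continuousOn, hH.map_zero, hH.map_one_mem, hH.map_mem, hH.map_eq_self⟩
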